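/- Let N ≥ 2, s ∈ (0,1), and let Ω ⊂ ℝ^N be a bounded Lipschitz domain. Let u ∈ H^s_{Ω,0} and let φ : ℝ^N → ℝ be continuous with compact support contained in Ω^c (so φ = 0 on cl(Ω)). Then φ ∈ H^s_{Ω,0}, the function (x,y) ↦ (u(x)−u(y))φ(x)/|x−y|^{N+2s} is integrable on Ω^c × Ω, and c_{N,s} ∬_{ℝ^{2N}\(Ω^c×Ω^c)} (u(x)−u(y))(φ(x)−φ(y))/|x−y|^{N+2s} dx dy = 2 ∫_{Ω^c} (𝒩_s u)(x) φ(x) dx. -/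

import Mathlib

open MeasureTheory Filter Topology Bornology Set
open scoped ENNReal NNReal

noncomputable section

namespace FracNeumann

abbrev Euc (N : ℕ) : Type := EuclideanSpace ℝ (Fin N)

/-- The kernel weight `|x - y| ^ (N + 2s)`. -/
def kern (N : ℕ) (s : ℝ) (x y : Euc N) : ℝ := ‖x - y‖ ^ ((N : ℝ) + 2 * s)

/-- The region `ℝ^{2N} \ (Ω^c × Ω^c)`, where `Ω^c := ℝ^N \ closure Ω`. -/
def reg (N : ℕ) (Ω : Set (Euc N)) : Set (Euc N × Euc N) :=
  {q | q.1 ∈ closure Ω ∨ q.2 ∈ closure Ω}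

/-- The squared seminorm `[u]_{H^s_{Ω,0}}²`, as an extended real number. -/
def semiSq (N : ℕ) (s : ℝ) (Ω : Set (Euc N)) (u : Euc N → ℝ) : ℝ≥0∞ :=
  ∫⁻ q in reg N Ω, ENNReal.ofReal ((u q.1 - u q.2) ^ 2 / kern N s q.1 q.2)

/-- `∫_Ω u²`, as an extended real number. -/
def l2sq (N : ℕ) (Ω : Set (Euc N)) (u : Euc N → ℝ) : ℝ≥0∞ :=
  ∫⁻ x in Ω, ENNReal.ofReal ((u x) ^ 2)

/-- Membership in `H^s_{Ω,0}`. -/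
def memHs (N : ℕ) (s : ℝ) (Ω : Set (Euc N)) (u : Euc N → ℝ) : Prop :=
  Measurable u ∧ l2sq N Ω u < ⊤ ∧ semiSq N s Ω u < ⊤

/-- The squared Gagliardo seminorm `[u]_{H^s(Ω)}²`. -/
def semiSqOn (N : ℕ) (s : ℝ) (Ω : Set (Euc N)) (u : Euc N → ℝ) : ℝ≥0∞ :=
  ∫⁻ q in Ω ×ˢ Ω, ENNReal.ofReal ((u q.1 - u q.2) ^ 2 / kern N s q.1 q.2)

/-- Membership in `H^s(Ω)` (for functions defined on all of `ℝ^N`). -/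
def memHsOn (N : ℕ) (s : ℝ) (Ω : Set (Euc N)) (u : Euc N → ℝ) : Prop :=
  Measurable u ∧ l2sq N Ω u < ⊤ ∧ semiSqOn N s Ω u < ⊤

/-- The normalizing constant `c_{N,s}` of the fractional Laplacian. -/
def cNs (N : ℕ) (s : ℝ) : ℝ :=
  (4 : ℝ) ^ s * s * Real.Gamma ((N : ℝ) / 2 + s) /
    (Real.pi ^ ((N : ℝ) / 2) * Real.Gamma (1 - s))

/-- The nonlocal Neumann derivative `𝒩_s u`. -/
def Nneu (N : ℕ) (s : ℝ) (Ω : Set (Euc N)) (u : Euc N → ℝ) (x : Euc N) : ℝ :=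
  cNs N s * ∫ y in Ω, (u x - u y) / kern N s x y

/-- Membership in `H̃^s_{Ω,0}`: members of `H^s_{Ω,0}` with `𝒩_s u = 0` a.e. in `Ω^c`. -/
def memHsTilde (N : ℕ) (s : ℝ) (Ω : Set (Euc N)) (u : Euc N → ℝ) : Prop :=
  memHs N s Ω u ∧ ∀ᵐ x ∂(volume.restrict (closure Ω)ᶜ), Nneu N s Ω u x = 0

/-- The first nontrivial Neumann eigenvalue `μ₁^{(s)}(Ω)`. -/
def mu1 (N : ℕ) (s : ℝ) (Ω : Set (Euc N)) : ℝ :=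
  sInf {t : ℝ | ∃ u : Euc N → ℝ, memHs N s Ω u ∧ (∫ x in Ω, (u x) ^ 2) = 1 ∧
    (∫ x in Ω, u x) = 0 ∧ t = cNs N s / 2 * (semiSq N s Ω u).toReal}

/-- The bilinear form (without the constant). -/
def bform (N : ℕ) (s : ℝ) (Ω : Set (Euc N)) (u v : Euc N → ℝ) : ℝ :=
  ∫ q in reg N Ω, (u q.1 - u q.2) * (v q.1 - v q.2) / kern N s q.1 q.2

/-- First nontrivial eigenfunction: weak solution associated to `μ₁^{(s)}(Ω)`. -/
def IsFirstEigen (N : ℕ) (s : ℝ) (Ω : Set (Euc N)) (u : Euc N → ℝ) : Prop :=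
  memHs N s Ω u ∧ ¬ (u =ᵐ[volume.restrict Ω] 0) ∧ (∫ x in Ω, u x) = 0 ∧
    ∀ v : Euc N → ℝ, memHs N s Ω v →
      cNs N s / 2 * bform N s Ω u v = mu1 N s Ω * ∫ x in Ω, u x * v x

/-- Reflection `σ_e(x) = x - 2(x·e)e` across the hyperplane `{x·e = 0}`. -/
def reflect (N : ℕ) (e x : Euc N) : Euc N := x - (2 * (inner ℝ x e : ℝ)) • e

/-- The polarization `P_e u` with respect to the hyperplane `{x·e = 0}`. -/
def polarize (N : ℕ) (e : Euc N) (u : Euc N → ℝ) (x : Euc N) : ℝ :=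
  if 0 ≤ (inner ℝ x e : ℝ) then min (u x) (u (reflect N e x))
  else max (u x) (u (reflect N e x))

/-- Foliated Schwarz symmetry with respect to `p`. -/
def FoliatedSchwarz (N : ℕ) (p : Euc N) (u : Euc N → ℝ) : Prop :=
  ∃ uh : ℝ → ℝ → ℝ, (∀ r : ℝ, AntitoneOn (uh r) (Icc 0 Real.pi)) ∧
    ∀ x : Euc N, x ≠ 0 → u x = uh ‖x‖ (Real.arccos ((inner ℝ x p : ℝ) / ‖x‖))

/-- Radial symmetry (pointwise). -/
def Radial (N : ℕ) (u : Euc N → ℝ) : Prop := ∃ f : ℝ → ℝ, ∀ x, u x = f ‖x‖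

/-- Radial symmetry (a.e.). -/
def RadialAE (N : ℕ) (u : Euc N → ℝ) : Prop :=
  ∃ f : ℝ → ℝ, ∀ᵐ x : Euc N ∂volume, u x = f ‖x‖

/-- The set `{x ∈ Ω : u x ≠ 0}` has exactly two connected components. -/
def TwoNodal (N : ℕ) (Ω : Set (Euc N)) (u : Euc N → ℝ) : Prop :=
  Nat.card (ConnectedComponents {x : Euc N // x ∈ Ω ∧ u x ≠ 0}) = 2

/-- Bounded Lipschitz domain: open, bounded, connected, and near every boundary point the set
is the region above the graph of a Lipschitz function in some direction `e`. -/
def IsLipschitzDomain (N : ℕ) (Ω : Set (Euc N)) : Prop :=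
  IsOpen Ω ∧ IsBounded Ω ∧ IsConnected Ω ∧
    ∀ x ∈ frontier Ω, ∃ e : Euc N, ‖e‖ = 1 ∧ ∃ r : ℝ, 0 < r ∧
      ∃ (L : NNReal) (f : Euc N → ℝ), LipschitzWith L f ∧
        ∀ y ∈ Metric.ball x r,
          (y ∈ Ω ↔ f (y - ((inner ℝ y e : ℝ)) • e) < (inner ℝ y e : ℝ))

/-- `g` is a weak gradient of `u` in `Ω`, square-integrable on `Ω`. -/
def IsWeakGradient (N : ℕ) (Ω : Set (Euc N)) (u : Euc N → ℝ) (g : Euc N → Euc N) : Prop :=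
  Measurable g ∧ (∫⁻ x in Ω, ENNReal.ofReal (‖g x‖ ^ 2)) < ⊤ ∧
    ∀ φ : Euc N → ℝ, ContDiff ℝ (⊤ : ℕ∞) φ → HasCompactSupport φ → tsupport φ ⊆ Ω →
      ∀ i : Fin N, (∫ x in Ω, u x * fderiv ℝ φ x (EuclideanSpace.single i 1)) =
        - ∫ x in Ω, g x i * φ x

/-- Membership in `H¹(Ω)`. -/
def memH1 (N : ℕ) (Ω : Set (Euc N)) (u : Euc N → ℝ) : Prop :=
  Measurable u ∧ l2sq N Ω u < ⊤ ∧ ∃ g, IsWeakGradient N Ω u g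

/-- `∫_Ω |∇u|²`, as an extended real number. -/
def gradSq (N : ℕ) (Ω : Set (Euc N)) (u : Euc N → ℝ) : ℝ≥0∞ :=
  ⨅ (g : Euc N → Euc N) (_ : IsWeakGradient N Ω u g), ∫⁻ x in Ω, ENNReal.ofReal (‖g x‖ ^ 2)

/-- Rayleigh quotient for the fractional Neumann problem. -/
def rayleighS (N : ℕ) (s : ℝ) (Ω : Set (Euc N)) (u : Euc N → ℝ) : ℝ≥0∞ :=
  ENNReal.ofReal (cNs N s / 2) * semiSq N s Ω u / l2sq N Ω u

/-- Rayleigh quotient for the local Neumann problem. -/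
def rayleigh1 (N : ℕ) (Ω : Set (Euc N)) (u : Euc N → ℝ) : ℝ≥0∞ :=
  gradSq N Ω u / l2sq N Ω u

/-- The min-max value `μ_n^{(s)}(Ω)` over `n`-dimensional subspaces of `H^s_{Ω,0} ∩ L²₀(Ω)`. -/
def muNs (N : ℕ) (s : ℝ) (Ω : Set (Euc N)) (n : ℕ) : ℝ≥0∞ :=
  ⨅ (A : Submodule ℝ (Euc N → ℝ)) (_ : Module.finrank ℝ A = n ∧
      (∀ u ∈ A, memHs N s Ω u ∧ (∫ x in Ω, u x) = 0) ∧
      (∀ u ∈ A, u =ᵐ[(volume : Measure (Euc N))] 0 → u = 0)),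
    ⨆ (u : Euc N → ℝ) (_ : u ∈ A ∧ u ≠ 0), rayleighS N s Ω u

/-- The min-max value over `n`-dimensional subspaces of `H̃^s_{Ω,0} ∩ L²₀(Ω)`. -/
def muNsTilde (N : ℕ) (s : ℝ) (Ω : Set (Euc N)) (n : ℕ) : ℝ≥0∞ :=
  ⨅ (A : Submodule ℝ (Euc N → ℝ)) (_ : Module.finrank ℝ A = n ∧
      (∀ u ∈ A, memHsTilde N s Ω u ∧ (∫ x in Ω, u x) = 0) ∧
      (∀ u ∈ A, u =ᵐ[(volume : Measure (Euc N))] 0 → u = 0)),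
    ⨆ (u : Euc N → ℝ) (_ : u ∈ A ∧ u ≠ 0), rayleighS N s Ω u

/-- The min-max value `μ_n^{(1)}(Ω)` over `n`-dimensional subspaces of `H¹(Ω) ∩ L²₀(Ω)`. -/
def muN1 (N : ℕ) (Ω : Set (Euc N)) (n : ℕ) : ℝ≥0∞ :=
  ⨅ (A : Submodule ℝ (Euc N → ℝ)) (_ : Module.finrank ℝ A = n ∧
      (∀ u ∈ A, memH1 N Ω u ∧ (∫ x in Ω, u x) = 0) ∧
      (∀ u ∈ A, u =ᵐ[volume.restrict Ω] 0 → u = 0)),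
    ⨆ (u : Euc N → ℝ) (_ : u ∈ A ∧ u ≠ 0), rayleigh1 N Ω u

/-- `μ_n^{(s)}(Ω)` including `μ₀^{(s)}(Ω) := 0`. -/
def muNsFull (N : ℕ) (s : ℝ) (Ω : Set (Euc N)) (n : ℕ) : ℝ≥0∞ :=
  if n = 0 then 0 else muNs N s Ω n

/-- `μ_n^{(1)}(Ω)` including `μ₀^{(1)}(Ω) := 0`. -/
def muN1Full (N : ℕ) (Ω : Set (Euc N)) (n : ℕ) : ℝ≥0∞ :=
  if n = 0 then 0 else muN1 N Ω n

/-- The squared `H^s_{Ω,0}`-seminorm of the `s`-minimal extension of `u`: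
the minimal value of `[v]²` over `v ∈ H^s_{Ω,0}` with `v = u` a.e. in `Ω`. -/
def minExtSemiSq (N : ℕ) (s : ℝ) (Ω : Set (Euc N)) (u : Euc N → ℝ) : ℝ≥0∞ :=
  ⨅ (v : Euc N → ℝ) (_ : memHs N s Ω v ∧ v =ᵐ[volume.restrict Ω] u), semiSq N s Ω v

/-- `ω_{N-1}`: volume of the unit ball of `ℝ^{N-1}`. -/
def omegaPrev (N : ℕ) : ℝ := (volume (Metric.ball (0 : Euc (N - 1)) 1)).toReal

/-- Membership in `L²₀(Ω)`. -/
def memL20 (N : ℕ) (Ω : Set (Euc N)) (u : Euc N → ℝ) : Prop :=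
  Measurable u ∧ l2sq N Ω u < ⊤ ∧ (∫ x in Ω, u x) = 0

/-- The functional `F_s` (value `+∞` outside `H^s(Ω)`). -/
def Fs (N : ℕ) (s : ℝ) (Ω : Set (Euc N)) (u : Euc N → ℝ) : ℝ≥0∞ :=
  ENNReal.ofReal (1 - s) * minExtSemiSq N s Ω u

/-- The functional `F₁` (value `+∞` outside `H¹(Ω)`). -/
def F1 (N : ℕ) (Ω : Set (Euc N)) (u : Euc N → ℝ) : ℝ≥0∞ :=
  ENNReal.ofReal (omegaPrev N / (2 * N)) * gradSq N Ω u

end FracNeumann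
namespace FracNeumann

/-- A Lipschitz graph is a null set. -/
lemma graph_null (N : ℕ) (e : Euc N) (he : ‖e‖ = 1) (f : Euc N → ℝ) (hf : Continuous f) :
    volume {y : Euc N | (inner ℝ y e : ℝ) - f (y - ((inner ℝ y e : ℝ)) • e) = 0} = 0 := by
  set h : Euc N → ℝ := fun y => (inner ℝ y e : ℝ) - f (y - ((inner ℝ y e : ℝ)) • e) with hh
  have hc : Continuous h := by fun_prop
  have key := Measure.countable_meas_level_set_pos (μ := (volume : Measure (Euc N))) hc.measurable
  have hee : (inner ℝ e e : ℝ) = 1 := by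
    rw [real_inner_self_eq_norm_sq, he]; norm_num
  have htr : ∀ t : ℝ, volume {y | h y = t} = volume {y | h y = 0} := by
    intro t
    have : {y | h y = t} = (fun y => y + (-t) • e) ⁻¹' {y | h y = 0} := by
      ext y
      have h1 : (inner ℝ (y + (-t) • e) e : ℝ) = inner ℝ y e - t := by
        rw [inner_add_left, real_inner_smul_left, hee]; ring
      have h2 : y + (-t) • e - (inner ℝ y e - t : ℝ) • e = y - (inner ℝ y e : ℝ) • e := by
        module
      have h3 : h (y + (-t) • e) = h y - t := by
        simp only [hh]
        rw [h1, h2]; ring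
      simp only [mem_setOf_eq, mem_preimage, h3]
      exact sub_eq_zero.symm
    rw [this, measure_preimage_add_right]
  by_contra hne
  have huniv : {t : ℝ | 0 < volume {a : Euc N | h a = t}} = univ := by
    ext t
    simp only [mem_setOf_eq, mem_univ, iff_true]
    rw [htr t]
    exact pos_iff_ne_zero.mpr hne
  rw [huniv] at key
  exact Cardinal.not_countable_real key

lemma frontier_null (N : ℕ) (Ω : Set (Euc N)) (hΩ : IsLipschitzDomain N Ω) :
    volume (frontier Ω) = 0 := by
  obtain ⟨hopen, -, -, hloc⟩ := hΩ
  apply measure_null_of_locally_null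
  intro x hx
  obtain ⟨e, he, r, hr, L, f, hf, hiff⟩ := hloc x hx
  have hfc := hf.continuous
  refine ⟨frontier Ω ∩ Metric.ball x r,
    inter_mem_nhdsWithin _ (Metric.ball_mem_nhds x hr), ?_⟩
  refine measure_mono_null ?_ (graph_null N e he f hfc)
  rintro y ⟨hy, hyb⟩
  rw [hopen.frontier_eq] at hy
  have h1 : ¬ (f (y - ((inner ℝ y e : ℝ)) • e) < (inner ℝ y e : ℝ)) :=
    fun h => hy.2 ((hiff y hyb).2 h)
  have h2 : ¬ ((inner ℝ y e : ℝ) < f (y - ((inner ℝ y e : ℝ)) • e)) := by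
    intro h
    have ho : IsOpen {z : Euc N | (inner ℝ z e : ℝ) < f (z - ((inner ℝ z e : ℝ)) • e)} :=
      isOpen_lt (by fun_prop) (by fun_prop)
    obtain ⟨z, hz, hzΩ⟩ := mem_closure_iff.1 hy.1 _ (ho.inter Metric.isOpen_ball) ⟨h, hyb⟩
    exact lt_asymm hz.1 ((hiff z hz.2).1 hzΩ)
  simp only [mem_setOf_eq]
  linarith

lemma kern_nonneg (N : ℕ) (s : ℝ) (x y : Euc N) : 0 ≤ kern N s x y :=
  Real.rpow_nonneg (norm_nonneg _) _

lemma kern_comm (N : ℕ) (s : ℝ) (x y : Euc N) : kern N s x y = kern N s y x := by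
  unfold kern; rw [norm_sub_rev]

lemma kern_measurable (N : ℕ) (s : ℝ) :
    Measurable (fun q : Euc N × Euc N => kern N s q.1 q.2) := by
  unfold kern
  fun_prop

lemma reg_measurable (N : ℕ) (Ω : Set (Euc N)) : MeasurableSet (reg N Ω) := by
  have : reg N Ω = Prod.fst ⁻¹' closure Ω ∪ Prod.snd ⁻¹' closure Ω := rfl
  rw [this]
  exact (measurable_fst isClosed_closure.measurableSet).union
    (measurable_snd isClosed_closure.measurableSet)

lemma memHs_test (N : ℕ) (s : ℝ) (hs : 0 < s)
    (Ω : Set (Euc N)) (hb : IsBounded Ω)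
    (φ : Euc N → ℝ) (hφc : Continuous φ) (hφs : HasCompactSupport φ)
    (hφsupp : tsupport φ ⊆ (closure Ω)ᶜ) : memHs N s Ω φ := by
  have hz : ∀ x ∈ closure Ω, φ x = 0 := fun x hx =>
    image_eq_zero_of_notMem_tsupport (fun h => hφsupp h hx)
  have hcl : IsCompact (closure Ω) := hb.isCompact_closure
  refine ⟨hφc.measurable, ?_, ?_⟩
  · unfold l2sq
    have : ∫⁻ x in Ω, ENNReal.ofReal ((φ x) ^ 2) = 0 := by
      refine le_antisymm ((setLIntegral_mono (g := fun _ => 0) measurable_const ?_).trans ?_)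
        zero_le
      · intro x hx
        simp [hz x (subset_closure hx)]
      · simp
    rw [this]; exact ENNReal.zero_lt_top
  · obtain ⟨δ, hδ, hd⟩ := Metric.exists_pos_forall_lt_edist (s := tsupport φ) (t := closure Ω)
      hφs isClosed_closure (disjoint_left.2 fun x hx => hφsupp hx)
    obtain ⟨M, hM⟩ := hφc.bounded_above_of_compact_support hφs
    set K := tsupport φ
    set p : ℝ := (N : ℝ) + 2 * s with hp
    have hp0 : 0 < p := by positivity
    have hdk : ∀ x ∈ K, ∀ y ∈ closure Ω, (δ : ℝ) ^ p ≤ kern N s x y := by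
      intro x hx y hy
      have h1 := hd x hx y hy
      rw [edist_nndist, ENNReal.coe_lt_coe] at h1
      have h2 : (δ : ℝ) ≤ ‖x - y‖ := by
        rw [← dist_eq_norm]; exact_mod_cast h1.le
      exact Real.rpow_le_rpow δ.2 h2 hp0.le
    have hδp : 0 < (δ : ℝ) ^ p := Real.rpow_pos_of_pos (by exact_mod_cast hδ) _
    set A : Set (Euc N × Euc N) := K ×ˢ closure Ω ∪ closure Ω ×ˢ K with hA
    have hAc : IsCompact A := (IsCompact.prod hφs hcl).union (IsCompact.prod hcl hφs)
    set C : ℝ≥0∞ := ENNReal.ofReal (M ^ 2 / (δ : ℝ) ^ p) with hC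
    have hsq : ∀ x, φ x ^ 2 ≤ M ^ 2 := by
      intro x
      have := hM x
      rw [Real.norm_eq_abs] at this
      exact sq_le_sq' (by linarith [neg_abs_le (φ x)]) ((le_abs_self _).trans this)
    have hbd : ∀ x y, y ∈ closure Ω →
        ((x, y) ∈ A → ENNReal.ofReal ((φ x - φ y) ^ 2 / kern N s x y) ≤ C) ∧
        ((x, y) ∉ A → (φ x - φ y) ^ 2 / kern N s x y = 0) := by
      intro x y hy
      rw [hz y hy, sub_zero]
      by_cases hx : x ∈ K
      · refine ⟨fun _ => ENNReal.ofReal_le_ofReal ?_, fun h => (h (Or.inl ⟨hx, hy⟩)).elim⟩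
        exact div_le_div₀ (sq_nonneg M) (hsq x) hδp (hdk x hx y hy)
      · have : φ x = 0 := image_eq_zero_of_notMem_tsupport hx
        simp [this]
    have hsw : ∀ x y, (x, y) ∈ A ↔ (y, x) ∈ A := by
      intro x y
      simp only [hA, mem_union, mem_prod]; tauto
    have hle : ∀ q ∈ reg N Ω, ENNReal.ofReal ((φ q.1 - φ q.2) ^ 2 / kern N s q.1 q.2) ≤
        A.indicator (fun _ => C) q := by
      rintro ⟨x, y⟩ hq
      have main : ((x, y) ∈ A → ENNReal.ofReal ((φ x - φ y) ^ 2 / kern N s x y) ≤ C) ∧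
        ((x, y) ∉ A → (φ x - φ y) ^ 2 / kern N s x y = 0) := by
        rcases hq with hq | hq
        · have := hbd y x hq
          rw [hsw, kern_comm, show (φ x - φ y) ^ 2 = (φ y - φ x) ^ 2 by ring]
          exact this
        · exact hbd x y hq
      by_cases hm : (x, y) ∈ A
      · rw [indicator_of_mem hm]; exact main.1 hm
      · rw [indicator_of_notMem hm]; simp only; rw [main.2 hm]; simp
    unfold semiSq
    calc ∫⁻ q in reg N Ω, ENNReal.ofReal ((φ q.1 - φ q.2) ^ 2 / kern N s q.1 q.2)
        ≤ ∫⁻ q in reg N Ω, A.indicator (fun _ => C) q :=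
          setLIntegral_mono' (reg_measurable N Ω) hle
      _ ≤ ∫⁻ q, A.indicator (fun _ => C) q := setLIntegral_le_lintegral _ _
      _ = C * volume A := by
          rw [lintegral_indicator hAc.measurableSet, setLIntegral_const]
      _ < ⊤ := ENNReal.mul_lt_top ENNReal.ofReal_lt_top hAc.measure_lt_top

lemma sq_integrable (N : ℕ) (s : ℝ) (Ω : Set (Euc N)) (u : Euc N → ℝ) (hu : memHs N s Ω u) :
    IntegrableOn (fun q : Euc N × Euc N => (u q.1 - u q.2) ^ 2 / kern N s q.1 q.2)
      (reg N Ω) volume := by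
  have hm : Measurable (fun q : Euc N × Euc N => (u q.1 - u q.2) ^ 2 / kern N s q.1 q.2) :=
    (((hu.1.comp measurable_fst).sub (hu.1.comp measurable_snd)).pow_const 2).div
      (kern_measurable N s)
  refine ⟨hm.aestronglyMeasurable, ?_⟩
  rw [hasFiniteIntegral_iff_ofReal
    (Eventually.of_forall fun q => div_nonneg (sq_nonneg _) (kern_nonneg N s _ _))]
  exact hu.2.2

lemma bform_integrable (N : ℕ) (s : ℝ) (Ω : Set (Euc N)) (u v : Euc N → ℝ)
    (hu : memHs N s Ω u) (hv : memHs N s Ω v) :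
    IntegrableOn (fun q : Euc N × Euc N => (u q.1 - u q.2) * (v q.1 - v q.2) / kern N s q.1 q.2)
      (reg N Ω) volume := by
  have hm : Measurable
      (fun q : Euc N × Euc N => (u q.1 - u q.2) * (v q.1 - v q.2) / kern N s q.1 q.2) :=
    (((hu.1.comp measurable_fst).sub (hu.1.comp measurable_snd)).mul
      ((hv.1.comp measurable_fst).sub (hv.1.comp measurable_snd))).div (kern_measurable N s)
  refine Integrable.mono' ((sq_integrable N s Ω u hu).add (sq_integrable N s Ω v hv))
    hm.aestronglyMeasurable (Eventually.of_forall fun q => ?_)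
  have hk := kern_nonneg N s q.1 q.2
  simp only [Pi.add_apply]
  rw [← add_div, norm_div, Real.norm_eq_abs, Real.norm_of_nonneg hk]
  apply div_le_div_of_nonneg_right _ hk
  rw [abs_le]
  constructor
  · nlinarith [sq_nonneg (u q.1 - u q.2 + (v q.1 - v q.2)), sq_nonneg (u q.1 - u q.2),
      sq_nonneg (v q.1 - v q.2)]
  · nlinarith [sq_nonneg (u q.1 - u q.2 - (v q.1 - v q.2)), sq_nonneg (u q.1 - u q.2),
      sq_nonneg (v q.1 - v q.2)]

/-- integration by parts against test functions supported in `Ω^c`, from the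
proofs of Propositions 2.2 and 2.4. -/
theorem statement19 (N : ℕ) (hN : 2 ≤ N) (s : ℝ) (hs : s ∈ Set.Ioo (0 : ℝ) 1)
    (Ω : Set (Euc N)) (hΩ : IsLipschitzDomain N Ω)
    (u : Euc N → ℝ) (hu : memHs N s Ω u)
    (φ : Euc N → ℝ) (hφc : Continuous φ) (hφs : HasCompactSupport φ)
    (hφsupp : tsupport φ ⊆ (closure Ω)ᶜ) :
    memHs N s Ω φ ∧
    MeasureTheory.IntegrableOn
      (fun q : Euc N × Euc N => (u q.1 - u q.2) * φ q.1 / kern N s q.1 q.2)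
      ((closure Ω)ᶜ ×ˢ Ω) volume ∧
    cNs N s * bform N s Ω u φ = 2 * ∫ x in (closure Ω)ᶜ, Nneu N s Ω u x * φ x := by
  have hφ := memHs_test N s hs.1 Ω hΩ.2.1 φ hφc hφs hφsupp
  have hz : ∀ x ∈ closure Ω, φ x = 0 := fun x hx =>
    image_eq_zero_of_notMem_tsupport (fun h => hφsupp h hx)
  set G : Euc N × Euc N → ℝ :=
    fun q => (u q.1 - u q.2) * (φ q.1 - φ q.2) / kern N s q.1 q.2 with hG
  set F : Euc N × Euc N → ℝ :=
    fun q => (u q.1 - u q.2) * φ q.1 / kern N s q.1 q.2 with hF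
  have hGi : IntegrableOn G (reg N Ω) volume := bform_integrable N s Ω u φ hu hφ
  have hcm : MeasurableSet (closure Ω) := isClosed_closure.measurableSet
  have hsub2 : (closure Ω)ᶜ ×ˢ closure Ω ⊆ reg N Ω := fun q hq => Or.inr hq.2
  have hsub1 : closure Ω ×ˢ (closure Ω)ᶜ ⊆ reg N Ω := fun q hq => Or.inl hq.1
  have hsub0 : closure Ω ×ˢ closure Ω ⊆ reg N Ω := fun q hq => Or.inl hq.1
  have hm2 : MeasurableSet ((closure Ω)ᶜ ×ˢ closure Ω) := hcm.compl.prod hcm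
  have hm1 : MeasurableSet (closure Ω ×ˢ (closure Ω)ᶜ) := hcm.prod hcm.compl
  have hm0 : MeasurableSet (closure Ω ×ˢ closure Ω) := hcm.prod hcm
  have hmO : MeasurableSet ((closure Ω)ᶜ ×ˢ Ω) := hcm.compl.prod hΩ.1.measurableSet
  have hGF : ∀ q ∈ (closure Ω)ᶜ ×ˢ closure Ω, G q = F q := by
    intro q hq
    simp only [hG, hF, hz q.2 hq.2, sub_zero]
  have hFi2 : IntegrableOn F ((closure Ω)ᶜ ×ˢ closure Ω) volume :=
    (hGi.mono_set hsub2).congr_fun hGF hm2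
  have hFi : IntegrableOn F ((closure Ω)ᶜ ×ˢ Ω) volume :=
    hFi2.mono_set (prod_mono_right subset_closure)
  refine ⟨hφ, hFi, ?_⟩
  -- decomposition of the region
  have hreg : reg N Ω = (closure Ω ×ˢ closure Ω ∪ (closure Ω)ᶜ ×ˢ closure Ω) ∪
      closure Ω ×ˢ (closure Ω)ᶜ := by
    ext q
    simp only [reg, mem_setOf_eq, mem_union, mem_prod, mem_compl_iff]
    tauto
  have hd1 : Disjoint (closure Ω ×ˢ closure Ω) ((closure Ω)ᶜ ×ˢ closure Ω) :=
    disjoint_left.2 fun q h1 h2 => h2.1 h1.1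
  have hd2 : Disjoint (closure Ω ×ˢ closure Ω ∪ (closure Ω)ᶜ ×ˢ closure Ω)
      (closure Ω ×ˢ (closure Ω)ᶜ) := by
    refine disjoint_left.2 fun q h1 h2 => ?_
    rcases h1 with h1 | h1
    · exact h2.2 h1.2
    · exact h2.2 h1.2
  have hB : bform N s Ω u φ = 2 * ∫ q in (closure Ω)ᶜ ×ˢ closure Ω, F q := by
    change ∫ q in reg N Ω, G q = _
    rw [hreg, setIntegral_union hd2 hm1
      ((hGi.mono_set hsub0).union (hGi.mono_set hsub2)) (hGi.mono_set hsub1),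
      setIntegral_union hd1 hm2 (hGi.mono_set hsub0) (hGi.mono_set hsub2)]
    have e0 : ∫ q in closure Ω ×ˢ closure Ω, G q = 0 := by
      apply setIntegral_eq_zero_of_forall_eq_zero
      intro q hq
      simp [hG, hz q.1 hq.1, hz q.2 hq.2]
    have e2 : ∫ q in (closure Ω)ᶜ ×ˢ closure Ω, G q = ∫ q in (closure Ω)ᶜ ×ˢ closure Ω, F q :=
      setIntegral_congr_fun hm2 hGF
    have e1 : ∫ q in closure Ω ×ˢ (closure Ω)ᶜ, G q = ∫ q in (closure Ω)ᶜ ×ˢ closure Ω, G q := by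
      have hswap : ∀ q : Euc N × Euc N, G q.swap = G q := by
        intro q
        simp only [hG, Prod.fst_swap, Prod.snd_swap]
        rw [kern_comm N s q.2 q.1]
        congr 1
        ring
      have := setIntegral_prod_swap (μ := (volume : Measure (Euc N)))
        (ν := (volume : Measure (Euc N))) ((closure Ω)ᶜ) (closure Ω) G
      simp only [hswap] at this
      exact this
    rw [e0, e1, e2]; ring
  have hae : (closure Ω : Set (Euc N)) =ᵐ[volume] Ω := by
    have : volume (closure Ω \ Ω) = 0 := by
      rw [← hΩ.1.frontier_eq]; exact frontier_null N Ω hΩ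
    exact (ae_le_set.2 this).antisymm (HasSubset.Subset.eventuallyLE subset_closure)
  have hI : ∫ q in (closure Ω)ᶜ ×ˢ closure Ω, F q =
      ∫ x in (closure Ω)ᶜ, ∫ y in Ω, F (x, y) := by
    rw [Measure.volume_eq_prod, setIntegral_prod F hFi2, Measure.restrict_congr_set hae]
  rw [hB, hI]
  have hN' : ∀ x, Nneu N s Ω u x * φ x = cNs N s * ∫ y in Ω, F (x, y) := by
    intro x
    unfold Nneu
    rw [mul_assoc, ← integral_mul_const]
    congr 2
    ext y
    simp only [hF]
    ring
  simp only [hN']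
  rw [integral_const_mul]
  ring

end FracNeumann
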